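/- For a partition μ with n ≥ 2|μ|, the symmetric function ĥ_μ defined by φ_n(ĥ_μ) = h_{(n−|μ|,μ)} satisfies ĥ_μ = ∑_{ν ⊢ |μ|} ∑_{λ} K_{νμ} s̃_λ, where the inner sum is over partitions λ such that ν/λ is a horizontal strip, and K_{νμ} is the Kostka number; equivalently the coefficient of s̃_λ in ĥ_μ is K_{(n−|λ|,λ),(n−|μ|,μ)}. -/

import Mathlib

open scoped BigOperators
noncomputable section

/-- The ring of symmetric functions, presented as `ℚ[p₁, p₂, p₃, …]`,
with the variable `X k` representing the power sum `p_k` (the variable `X 0` is unused). -/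
abbrev SymFn := MvPolynomial ℕ ℚ

/-- The power sum symmetric function `p_k`. -/
def pGen (k : ℕ) : SymFn := MvPolynomial.X k

/-- `p_λ` for a multiset of parts. -/
def pMul (m : Multiset ℕ) : SymFn := (m.map pGen).prod

/-- `p_λ` for a partition `λ`. -/
def pPart {n : ℕ} (lam : n.Partition) : SymFn := pMul lam.parts

/-- `z_λ = ∏_i i^{m_i(λ)} m_i(λ)!`. -/
def zed {n : ℕ} (lam : n.Partition) : ℚ :=
  ∏ i ∈ Finset.range (n + 1),
    (i : ℚ) ^ (lam.parts.count i) * (Nat.factorial (lam.parts.count i))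

/-- `z` of a monomial in the `p`-generators. -/
def zMon (m : ℕ →₀ ℕ) : ℚ :=
  ∏ i ∈ m.support, (i : ℚ) ^ (m i) * (Nat.factorial (m i))

/-- The Hall scalar product, determined by `⟨p_λ, p_μ⟩ = z_λ δ_{λμ}`. -/
def hall (f g : SymFn) : ℚ :=
  ∑ m ∈ f.support, MvPolynomial.coeff m f * MvPolynomial.coeff m g * zMon m

/-- The complete homogeneous symmetric function `h_m = ∑_{λ ⊢ m} p_λ / z_λ`. -/
def hFn (m : ℕ) : SymFn := ∑ lam : m.Partition, (zed lam)⁻¹ • pPart lam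

/-- `h_k` for an integer index, vanishing for negative `k`. -/
def hInt (k : ℤ) : SymFn := if 0 ≤ k then hFn k.toNat else 0

/-- The Schur function of a (finite, weakly decreasing) list of row lengths,
via the Jacobi–Trudi determinant `s_λ = det(h_{λ_i - i + j})`. -/
def schurList (l : List ℕ) : SymFn :=
  Matrix.det (Matrix.of fun i j : Fin l.length =>
    hInt ((l.get i : ℤ) - (i : ℤ) + (j : ℤ)))

/-- The parts of a partition, sorted in weakly decreasing order. -/
def partList {n : ℕ} (lam : n.Partition) : List ℕ := (lam.parts.sort (· ≤ ·)).reverse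

/-- The Schur function `s_λ`. -/
def schur {n : ℕ} (lam : n.Partition) : SymFn := schurList (partList lam)

/-- Evaluation `f(Ξ_ν)` of a symmetric function at the eigenvalues of a permutation
matrix of cycle type `ν`: the power sum `p_k` evaluates to `∑_{j ∈ ν, j ∣ k} j`. -/
def xiEval {n : ℕ} (nu : n.Partition) (f : SymFn) : ℚ :=
  MvPolynomial.eval (fun k => ((nu.parts.filter (fun j => j ∣ k)).sum : ℚ)) f

/-- The character scalar product `⟨f, g⟩_@ = ∑_{ν ⊢ n} f(Ξ_ν) g(Ξ_ν) / z_ν`. -/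
def atProd (n : ℕ) (f g : SymFn) : ℚ :=
  ∑ nu : n.Partition, xiEval nu f * xiEval nu g / zed nu

/-- The Frobenius-type map `φ_n(f) = ∑_{ν ⊢ n} f(Ξ_ν) p_ν / z_ν`. -/
def phi (n : ℕ) (f : SymFn) : SymFn :=
  ∑ nu : n.Partition, (xiEval nu f / zed nu) • pPart nu

/-- The Kronecker (internal) product, determined by
`(p_λ/z_λ) ∗ (p_μ/z_μ) = δ_{λμ} p_λ/z_λ`. -/
def kron (f g : SymFn) : SymFn :=
  ∑ m ∈ f.support,
    MvPolynomial.monomial m (MvPolynomial.coeff m f * MvPolynomial.coeff m g * zMon m)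

end


open scoped BigOperators
noncomputable section

/-- A (possibly skew) tableau, in French notation: `rows 0` is the bottom row.
`inn i` is the number of cells of the inner shape in row `i`, and `rows i`
lists the entries of row `i` from left to right. -/
structure SkewTab where
  inn : List ℕ
  rows : List (List ℕ)

namespace SkewTab

/-- Inner shape of row `i`. -/
def innFn (T : SkewTab) (i : ℕ) : ℕ := T.inn.getD i 0

/-- Outer shape of row `i`. -/
def outFn (T : SkewTab) (i : ℕ) : ℕ := T.innFn i + (T.rows.getD i []).length

/-- The entry in row `i`, column `j` (for cells of the skew shape). -/
def entry (T : SkewTab) (i j : ℕ) : ℕ := (T.rows.getD i []).getD (j - T.innFn i) 0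

/-- Column strict (skew) tableau: rows weakly increase left to right, columns
strictly increase bottom to top, entries are positive integers. -/
def IsSkewCST (T : SkewTab) : Prop :=
  T.inn.length = T.rows.length ∧
  (∀ i, T.innFn (i + 1) ≤ T.innFn i) ∧
  (∀ i, T.outFn (i + 1) ≤ T.outFn i) ∧
  (T.rows ≠ [] → T.outFn (T.rows.length - 1) ≠ 0) ∧
  (∀ r ∈ T.rows, r.Chain' (· ≤ ·)) ∧
  (∀ r ∈ T.rows, ∀ x ∈ r, 0 < x) ∧
  (∀ i j, T.innFn (i + 1) ≤ j → j < T.outFn (i + 1) → T.innFn i ≤ j →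
    T.entry i j < T.entry (i + 1) j)

/-- A column strict tableau of straight shape. -/
def IsCST (T : SkewTab) : Prop :=
  T.IsSkewCST ∧ T.inn = List.replicate T.rows.length 0

/-- The (outer) shape of a straight-shape tableau, as the list of row lengths. -/
def shape (T : SkewTab) : List ℕ := T.rows.map List.length

/-- The reading word: rows are read bottom to top, each row right to left. -/
def read (T : SkewTab) : List ℕ := (T.rows.map List.reverse).flatten

/-- The number of occurrences of the letter `x` among the entries of `T`. -/
def contentCount (T : SkewTab) (x : ℕ) : ℕ := T.rows.flatten.count x

end SkewTab

/-- A word `w` (in the alphabet of positive integers) is lattice if every prefix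
contains at least as many `i`'s as `(i+1)`'s, for every `i ≥ 1`. -/
def IsLatticeWord (w : List ℕ) : Prop :=
  ∀ p i, 1 ≤ i → (w.take p).count (i + 1) ≤ (w.take p).count i

/-- A word has content `ν` (i.e. `{{1^{ν_1}, 2^{ν_2}, …}}`) if the letter `i+1`
occurs exactly `ν_{i+1}` times, where `ν` is given as a weakly decreasing list. -/
def HasContent (w : List ℕ) (l : List ℕ) : Prop :=
  ∀ i, w.count (i + 1) = l.getD i 0

/-- One elementary Knuth transformation. -/
inductive KnuthStep : List ℕ → List ℕ → Prop
  | k1 (u v : List ℕ) {x y z : ℕ} (h1 : x ≤ y) (h2 : y < z) :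
      KnuthStep (u ++ x :: z :: y :: v) (u ++ z :: x :: y :: v)
  | k2 (u v : List ℕ) {x y z : ℕ} (h1 : x < y) (h2 : y ≤ z) :
      KnuthStep (u ++ y :: x :: z :: v) (u ++ y :: z :: x :: v)

/-- Knuth (plactic) equivalence of words; two skew tableaux are jeu de taquin
equivalent exactly when their reading words are Knuth equivalent. -/
def KnuthEquiv : List ℕ → List ℕ → Prop := Relation.EqvGen KnuthStep

end



section JacobiTrudi

variable {R : Type*} [CommRing R]

/-- Sign-reversing involution: in the sum of an alternating function over all translates of `a`
by a composition of `r`, only the translates with `a i + β i < a (g i)` survive. -/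
theorem sum_piAntidiag_eq_sum_filter_of_alternating {ι : Type*} [LinearOrder ι] [Fintype ι]
    (F : (ι → ℤ) → R)
    (hswap : ∀ b i j, i ≠ j → F (b ∘ Equiv.swap i j) = -F b)
    (hzero : ∀ b i j, i ≠ j → b i = b j → F b = 0)
    (a : ι → ℤ) (g : ι → ι) (ha : ∀ i, i < g i → a i < a (g i)) (r : ℕ) :
    ∑ β ∈ Finset.piAntidiag Finset.univ r, F (fun i => a i + β i) =
      ∑ β ∈ Finset.piAntidiag Finset.univ r with ∀ i, i < g i → a i + β i < a (g i),
        F (fun i => a i + β i) := by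
  classical
  rcases isEmpty_or_nonempty ι with _ | _
  · simp
  rw [← Finset.sum_filter_add_sum_filter_not (Finset.piAntidiag Finset.univ r)
    (fun β : ι → ℕ => ∀ i, i < g i → a i + β i < a (g i)), add_eq_left]
  have key : ∀ β : ι → ℕ, (¬ ∀ i, i < g i → a i + β i < a (g i)) →
      ∃ i, (i < g i ∧ a (g i) ≤ a i + β i) ∧
        ∀ j < i, ¬ (j < g j ∧ a (g j) ≤ a j + β j) := by
    intro β hβ
    push Not at hβ
    obtain ⟨i, hi⟩ := hβ
    obtain ⟨i, hi, hmin⟩ := WellFounded.has_min (wellFounded_lt (α := ι))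
      {i | i < g i ∧ a (g i) ≤ a i + β i} ⟨i, hi⟩
    exact ⟨i, hi, fun j hj h => hmin j h hj⟩
  choose! pick hpick hmin using key
  let swp : (ι → ℕ) → ι → ℕ := fun β i =>
    (a (Equiv.swap (pick β) (g (pick β)) i) + β (Equiv.swap (pick β) (g (pick β)) i) - a i).toNat
  have hswp : ∀ β : ι → ℕ, (¬ ∀ i, i < g i → a i + β i < a (g i)) → ∀ i,
      a i + swp β i = a (Equiv.swap (pick β) (g (pick β)) i) +
        β (Equiv.swap (pick β) (g (pick β)) i) := by
    intro β hβ i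
    obtain ⟨h1, h2⟩ := hpick β hβ
    have h3 := ha _ h1
    have : a i ≤ a (Equiv.swap (pick β) (g (pick β)) i) +
        β (Equiv.swap (pick β) (g (pick β)) i) := by
      rcases eq_or_ne i (pick β) with rfl | hi
      · rw [Equiv.swap_apply_left]; omega
      rcases eq_or_ne i (g (pick β)) with rfl | hi'
      · rw [Equiv.swap_apply_right]; omega
      · rw [Equiv.swap_apply_of_ne_of_ne hi hi']; omega
    simp only [swp]
    omega
  have hbad : ∀ β : ι → ℕ, (¬ ∀ i, i < g i → a i + β i < a (g i)) →
      pick β < g (pick β) ∧ a (g (pick β)) ≤ a (pick β) + swp β (pick β) := by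
    intro β hβ
    obtain ⟨h1, h2⟩ := hpick β hβ
    refine ⟨h1, ?_⟩
    rw [hswp β hβ, Equiv.swap_apply_left]
    omega
  have hbad' : ∀ β : ι → ℕ, (¬ ∀ i, i < g i → a i + β i < a (g i)) →
      ¬ ∀ i, i < g i → a i + swp β i < a (g i) := by
    intro β hβ h
    obtain ⟨h1, h2⟩ := hbad β hβ
    exact absurd (h _ h1) (not_lt.2 h2)
  have hpeq : ∀ β : ι → ℕ, (¬ ∀ i, i < g i → a i + β i < a (g i)) →
      pick (swp β) = pick β := by
    intro β hβ
    rcases lt_trichotomy (pick (swp β)) (pick β) with h | h | h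
    · exfalso
      have h1 := hpick _ (hbad' β hβ)
      have h2 := hmin β hβ _ h
      rw [hswp β hβ, Equiv.swap_apply_of_ne_of_ne h.ne
        (h.trans (hpick β hβ).1).ne] at h1
      exact h2 h1
    · exact h
    · exact absurd (hbad β hβ) (hmin _ (hbad' β hβ) _ h)
  refine Finset.sum_involution (fun β _ => swp β) ?_ ?_ ?_ ?_
  · intro β hβ
    have hβ' := (Finset.mem_filter.1 hβ).2
    have : (fun i => a i + (swp β i : ℤ)) =
        (fun i => a i + (β i : ℤ)) ∘ Equiv.swap (pick β) (g (pick β)) := by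
      funext i; exact hswp β hβ' i
    rw [this, hswap _ _ _ (hpick β hβ').1.ne]
    simp
  · intro β hβ hne heq
    have hβ' := (Finset.mem_filter.1 hβ).2
    apply hne
    apply hzero _ _ _ (hpick β hβ').1.ne
    have := hswp β hβ' (pick β)
    rwa [Equiv.swap_apply_left, heq] at this
  · intro β hβ
    have hβ' := (Finset.mem_filter.1 hβ)
    refine Finset.mem_filter.2 ⟨?_, hbad' β hβ'.2⟩
    have hs := hβ'.1
    simp only [Finset.mem_piAntidiag, Finset.mem_univ, implies_true, and_true] at hs ⊢
    have h1 : ∑ i, (a i + (swp β i : ℤ)) = ∑ i, (a i + (β i : ℤ)) := by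
      simp_rw [hswp β hβ'.2]
      exact Equiv.sum_comp (Equiv.swap (pick β) (g (pick β))) (fun i => a i + (β i : ℤ))
    rw [Finset.sum_add_distrib, Finset.sum_add_distrib] at h1
    rw [← hs]
    exact_mod_cast add_left_cancel h1
  · intro β hβ
    have hβ' := (Finset.mem_filter.1 hβ).2
    funext i
    have h1 := hswp _ (hbad' β hβ') i
    rw [hpeq β hβ', hswp β hβ', Equiv.swap_apply_self] at h1
    exact_mod_cast add_left_cancel h1

/-- The Jacobi–Trudi type determinant `det (h (a i + j))`. -/
def jtDet (h : ℤ → R) {k : ℕ} (a : Fin k → ℤ) : R :=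
  Matrix.det (Matrix.of fun i j : Fin k => h (a i + (j : ℤ)))

theorem sum_det_row_shift_eq_sum_det_col_shift (h : ℤ → R) {k : ℕ} (a c : Fin k → ℤ) (r : ℕ) :
    ∑ β ∈ Finset.piAntidiag Finset.univ r,
        Matrix.det (Matrix.of fun i j : Fin k => h (a i + β i + c j)) =
      ∑ β ∈ Finset.piAntidiag Finset.univ r,
        Matrix.det (Matrix.of fun i j : Fin k => h (a i + (c j + β j))) := by
  simp only [Matrix.det_apply, Matrix.of_apply]
  rw [Finset.sum_comm, Finset.sum_comm (s := Finset.piAntidiag Finset.univ r)]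
  refine Finset.sum_congr rfl fun σ _ => ?_
  refine Finset.sum_nbij' (fun β => β ∘ σ) (fun β => β ∘ σ.symm) ?_ ?_ ?_ ?_ ?_
  · intro β hβ
    simp only [Finset.mem_piAntidiag, Finset.mem_univ, implies_true, and_true] at hβ ⊢
    rw [← hβ]
    exact Equiv.sum_comp σ β
  · intro β hβ
    simp only [Finset.mem_piAntidiag, Finset.mem_univ, implies_true, and_true] at hβ ⊢
    rw [← hβ]
    exact Equiv.sum_comp σ.symm β
  · intro β _; funext i; simp
  · intro β _; funext i; simp
  · intro β _
    simp only [Function.comp_apply]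
    congr 1
    refine Finset.prod_congr rfl fun i _ => ?_
    congr 1
    ring

theorem jtDet_comp_swap (h : ℤ → R) {k : ℕ} (b : Fin k → ℤ) (i j : Fin k) (hij : i ≠ j) :
    jtDet h (b ∘ Equiv.swap i j) = -jtDet h b := by
  have := Matrix.det_permute (Equiv.swap i j)
    (Matrix.of fun i j : Fin k => h (b i + (j : ℤ)))
  rw [Equiv.Perm.sign_swap hij] at this
  simpa [jtDet, Matrix.submatrix] using this

theorem jtDet_eq_zero_of_eq (h : ℤ → R) {k : ℕ} (b : Fin k → ℤ) (i j : Fin k) (hij : i ≠ j)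
    (hb : b i = b j) : jtDet h b = 0 :=
  Matrix.det_zero_of_row_eq hij (by funext l; simp [hb])

theorem sum_det_col_shift (h : ℤ → R) {k : ℕ} (a : Fin (k + 1) → ℤ) (r : ℕ) :
    ∑ β ∈ Finset.piAntidiag Finset.univ r,
        Matrix.det (Matrix.of fun i j : Fin (k + 1) => h (a i + ((j : ℤ) + β j))) =
      Matrix.det (Matrix.of fun i j : Fin (k + 1) =>
        h (a i + ((j : ℤ) + (Pi.single (Fin.last k) r : Fin (k + 1) → ℕ) j))) := by
  let F : (Fin (k + 1) → ℤ) → R := fun c =>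
    Matrix.det (Matrix.of fun i j : Fin (k + 1) => h (a i + c j))
  have := sum_piAntidiag_eq_sum_filter_of_alternating F
    (by
      intro b i j hij
      have := Matrix.det_permute' (Equiv.swap i j)
        (Matrix.of fun i j : Fin (k + 1) => h (a i + b j))
      rw [Equiv.Perm.sign_swap hij] at this
      simpa [F, Matrix.submatrix] using this)
    (by
      intro b i j hij hb
      exact Matrix.det_zero_of_column_eq hij (by intro l; simp [hb]))
    (fun j => (j : ℤ)) (fun j => if hj : (j : ℕ) < k then ⟨j + 1, by omega⟩ else j)
    (by
      intro i hi
      have := Fin.lt_def.1 hi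
      exact_mod_cast this) r
  refine this.trans ?_
  rw [Finset.sum_eq_single (Pi.single (Fin.last k) r)]
  · intro β hβ hne
    refine absurd ?_ hne
    simp only [Finset.mem_filter, Finset.mem_piAntidiag, Finset.mem_univ, implies_true,
      and_true] at hβ
    obtain ⟨hs, hβ⟩ := hβ
    have h0 : ∀ j : Fin k, β j.castSucc = 0 := by
      intro j
      have := hβ j.castSucc (by simp [Fin.lt_def])
      simp at this
      omega
    rw [Fin.sum_univ_castSucc, Finset.sum_eq_zero (fun j _ => h0 j), zero_add] at hs
    funext j
    refine Fin.lastCases ?_ (fun j => ?_) j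
    · simp [hs]
    · rw [h0, Pi.single_eq_of_ne (Fin.castSucc_lt_last j).ne]
  · intro hn
    refine absurd ?_ hn
    simp only [Finset.mem_filter, Finset.mem_piAntidiag, Finset.mem_univ, implies_true,
      and_true]
    refine ⟨by simp, fun i hi => ?_⟩
    by_cases hik : (i : ℕ) < k
    · have hne : i ≠ Fin.last k := by intro h; simp [h] at hik
      simp [hik, Pi.single_eq_of_ne hne]
    · simp [hik] at hi

theorem det_of_last_row {k : ℕ} (M : Matrix (Fin k.succ) (Fin k.succ) R)
    (h0 : ∀ j : Fin k, M (Fin.last k) j.castSucc = 0) :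
    M.det = M (Fin.last k) (Fin.last k) *
      (M.submatrix Fin.castSucc Fin.castSucc).det := by
  rw [Matrix.det_succ_row M (Fin.last k), Fin.sum_univ_castSucc,
    Finset.sum_eq_zero (fun j _ => by simp [h0]), zero_add, Fin.succAbove_last]
  simp [← two_mul, pow_mul]

/-- The Schur function of a shape with `k` rows (possibly empty). -/
def schurFn (h : ℤ → R) {k : ℕ} (ν : Fin k → ℕ) : R :=
  jtDet h fun i => (ν i : ℤ) - (i : ℤ)

theorem schurFn_snoc_zero (h : ℤ → R) (h0 : h 0 = 1) (hneg : ∀ z < 0, h z = 0) {k : ℕ}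
    (ν : Fin (k + 1) → ℕ) (hν : ν (Fin.last k) = 0) :
    schurFn h ν = schurFn h (fun i : Fin k => ν i.castSucc) := by
  unfold schurFn jtDet
  rw [det_of_last_row]
  · simp only [Matrix.of_apply, hν, Fin.val_last]
    rw [show ((0 : ℕ) : ℤ) - (k : ℤ) + (k : ℤ) = 0 by simp, h0, one_mul]
    rfl
  · intro j
    simp only [Matrix.of_apply, hν, Fin.val_last, Fin.val_castSucc]
    exact hneg _ (by have := j.2; omega)

/-- The shape `ν`, with `k` rows, interlaces the shape `κ`, with `k + 1` rows
(that is, `κ / ν` is a horizontal strip). -/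
def Interlaces {k : ℕ} (ν : Fin k → ℕ) (κ : Fin (k + 1) → ℕ) : Prop :=
  ∀ i : Fin k, κ i.succ ≤ ν i ∧ ν i ≤ κ i.castSucc

instance {k : ℕ} (ν : Fin k → ℕ) (κ : Fin (k + 1) → ℕ) : Decidable (Interlaces ν κ) :=
  inferInstanceAs (Decidable (∀ _, _))

theorem Interlaces.antitone {k : ℕ} {ν : Fin k → ℕ} {κ : Fin (k + 1) → ℕ}
    (h : Interlaces ν κ) : Antitone κ :=
  Fin.antitone_iff_succ_le.2 fun i => (h i).1.trans (h i).2

/-- The Pieri rule. -/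
theorem mul_schurFn (h : ℤ → R) (hneg : ∀ z < 0, h z = 0) {k : ℕ}
    (ν : Fin k → ℕ) (hν : Antitone ν) (r : ℕ) :
    h r * schurFn h ν =
      ∑ κ ∈ Finset.piAntidiag Finset.univ (r + ∑ i, ν i) with Interlaces ν κ, schurFn h κ := by
  let α : Fin (k + 1) → ℕ := Fin.snoc ν 0
  have hα : Antitone α := by
    rw [Fin.antitone_iff_succ_le]
    intro i
    rcases Nat.lt_or_ge (i + 1) k with hi | hi
    · have : i.succ = Fin.castSucc ⟨i + 1, hi⟩ := rfl
      rw [this]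
      simp only [α, Fin.snoc_castSucc]
      exact hν (Fin.le_def.2 (by simp))
    · have : i.succ = Fin.last k := Fin.ext (by simp; omega)
      simp [this, α]
  let g : Fin (k + 1) → Fin (k + 1) := fun i => ⟨i - 1, by omega⟩
  have hr : ∑ β ∈ Finset.piAntidiag (Finset.univ : Finset (Fin (k + 1))) r,
        jtDet h (fun i => (α i : ℤ) - (i : ℤ) + β i) =
      ∑ β ∈ Finset.piAntidiag (Finset.univ : Finset (Fin (k + 1))) r with
        ∀ i, g i < i → (α i : ℤ) - (i : ℤ) + β i < (α (g i) : ℤ) - (g i : ℤ),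
        jtDet h (fun i => (α i : ℤ) - (i : ℤ) + β i) := by
    classical
    refine (sum_piAntidiag_eq_sum_filter_of_alternating (ι := (Fin (k + 1))ᵒᵈ)
      (fun b : Fin (k + 1) → ℤ => jtDet h b) (jtDet_comp_swap h) (jtDet_eq_zero_of_eq h)
      (fun i : Fin (k + 1) => (α i : ℤ) - (i : ℤ)) g ?_ r).trans ?_
    · intro (i : Fin (k + 1)) (hi : g i < i)
      have := hα hi.le
      have := Fin.lt_def.1 hi
      change (α i : ℤ) - (i : ℤ) < (α (g i) : ℤ) - (g i : ℤ)
      omega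
    · refine Finset.sum_congr ?_ fun _ _ => rfl
      ext β
      refine ⟨fun hβ => ?_, fun hβ => ?_⟩ <;>
      · obtain ⟨h1, h2⟩ := Finset.mem_filter.1 hβ
        exact Finset.mem_filter.2
          ⟨Finset.mem_piAntidiag.2 (Finset.mem_piAntidiag.1 h1), fun i hi => h2 i hi⟩
  have hl := sum_det_row_shift_eq_sum_det_col_shift h
    (fun i : Fin (k + 1) => (α i : ℤ) - (i : ℤ)) (fun j => (j : ℤ)) r
  have hα0 : α (Fin.last k) = 0 := by simp [α]
  have hαc : ∀ i : Fin k, α i.castSucc = ν i := fun i => by simp [α]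
  have hαs : ∑ i, α i = ∑ i, ν i := by simp [Fin.sum_univ_castSucc, hα0, hαc]
  have hg : ∀ i : Fin k, g i.succ = i.castSucc := fun i => Fin.ext (by simp [g])
  rw [sum_det_col_shift, det_of_last_row] at hl
  · have h1 : Matrix.det ((Matrix.of fun i j : Fin (k + 1) => h ((α i : ℤ) - (i : ℤ) +
        ((j : ℤ) + (Pi.single (Fin.last k) r : Fin (k + 1) → ℕ) j))).submatrix
          Fin.castSucc Fin.castSucc) = schurFn h ν := by
      unfold schurFn jtDet
      congr 1
      ext i j
      simp [hαc]
    rw [h1] at hl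
    have h2 : (Matrix.of fun i j : Fin (k + 1) => h ((α i : ℤ) - (i : ℤ) +
        ((j : ℤ) + (Pi.single (Fin.last k) r : Fin (k + 1) → ℕ) j))) (Fin.last k) (Fin.last k) =
          h r := by
      simp [hα0]
    rw [h2] at hl
    rw [← hl]
    refine hr.trans ?_
    refine Finset.sum_nbij' (fun β i => α i + β i) (fun κ i => κ i - α i) ?_ ?_ ?_ ?_ ?_
    · intro β hβ
      obtain ⟨hβs, hβ⟩ := Finset.mem_filter.1 hβ
      refine Finset.mem_filter.2 ⟨?_, fun i => ⟨?_, ?_⟩⟩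
      · simp only [Finset.mem_piAntidiag, Finset.mem_univ, implies_true, and_true] at hβs ⊢
        rw [Finset.sum_add_distrib, hβs, hαs, add_comm]
      · have h3 := hβ i.succ (Fin.lt_def.2 (by simp [g]))
        rw [hg, hαc] at h3
        simp only [Fin.val_succ, Fin.val_castSucc] at h3 ⊢
        push_cast at h3
        omega
      · simp only [hαc]
        exact Nat.le_add_right _ _
    · intro κ hκ
      obtain ⟨hκs, hκ⟩ := Finset.mem_filter.1 hκ
      have hle : ∀ i, α i ≤ κ i := by
        intro i
        refine Fin.lastCases ?_ (fun i => ?_) i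
        · simp [hα0]
        · rw [hαc]
          exact (hκ i).2
      refine Finset.mem_filter.2 ⟨?_, fun i hi => ?_⟩
      · simp only [Finset.mem_piAntidiag, Finset.mem_univ, implies_true, and_true] at hκs ⊢
        have h4 : ∑ i, (κ i - α i) + ∑ i, α i = Finset.univ.sum κ := by
          rw [← Finset.sum_add_distrib]
          exact Finset.sum_congr rfl fun i _ => Nat.sub_add_cancel (hle i)
        omega
      · revert hi
        refine Fin.cases (fun hi => ?_) (fun i hi => ?_) i
        · exact absurd (Fin.lt_def.1 hi) (by simp)
        · have h5 := (hκ i).1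
          have h6 := hle i.succ
          rw [hg, hαc]
          simp only [Fin.val_succ, Fin.val_castSucc]
          push_cast [h6]
          omega
    · intro β hβ
      funext i
      simp
    · intro κ hκ
      have hκ' := (Finset.mem_filter.1 hκ).2
      funext i
      refine Fin.lastCases ?_ (fun i => ?_) i
      · simp [hα0]
      · have := (hκ' i).2
        simp only [hαc]
        omega
    · intro β hβ
      unfold schurFn
      congr 1
      funext i
      push_cast
      ring
  · intro j
    have := j.2
    simp only [Matrix.of_apply, hα0, Fin.val_last, Fin.val_castSucc,
      Pi.single_eq_of_ne (Fin.castSucc_lt_last j).ne]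
    exact hneg _ (by omega)

end JacobiTrudi

/-- The number of chains of interlacing shapes `ν⁰, ν¹, …, νˡ = ν` in which `νᵏ` has `k` rows
and size `c 0 + ⋯ + c (k - 1)`. -/
def kostka (c : ℕ → ℕ) : (l : ℕ) → (Fin l → ℕ) → ℕ
  | 0, _ => 1
  | l + 1, κ => ∑ ν ∈ Finset.piAntidiag Finset.univ (∑ y ∈ Finset.range l, c y) with
      Interlaces ν κ, kostka c l ν

theorem kostka_eq_zero_of_not_antitone (c : ℕ → ℕ) :
    ∀ (l : ℕ) (κ : Fin l → ℕ), ¬ Antitone κ → kostka c l κ = 0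
  | 0, _, h => absurd (fun i => i.elim0) h
  | _ + 1, _, h => Finset.sum_eq_zero fun _ hν =>
      absurd (Finset.mem_filter.1 hν).2.antitone h

theorem prod_eq_sum_kostka_mul_schurFn {R : Type*} [CommRing R] (h : ℤ → R)
    (hneg : ∀ z < 0, h z = 0) (c : ℕ → ℕ) (l : ℕ) :
    ∏ y ∈ Finset.range l, h (c y) =
      ∑ ν ∈ Finset.piAntidiag (Finset.univ : Finset (Fin l)) (∑ y ∈ Finset.range l, c y),
        (kostka c l ν : R) * schurFn h ν := by
  induction l with
  | zero => simp [kostka, schurFn, jtDet]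
  | succ l ih =>
    rw [Finset.prod_range_succ, ih, Finset.sum_mul]
    have step : ∀ ν ∈ Finset.piAntidiag (Finset.univ : Finset (Fin l))
          (∑ y ∈ Finset.range l, c y), (kostka c l ν : R) * schurFn h ν * h (c l) =
        ∑ κ ∈ Finset.piAntidiag (Finset.univ : Finset (Fin (l + 1)))
          (∑ y ∈ Finset.range (l + 1), c y) with Interlaces ν κ,
            (kostka c l ν : R) * schurFn h κ := by
      intro ν hν
      by_cases ha : Antitone ν
      · have hs : ∑ i, ν i = ∑ y ∈ Finset.range l, c y := (Finset.mem_piAntidiag.1 hν).1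
        rw [mul_assoc, mul_comm (schurFn h ν), mul_schurFn h hneg ν ha, hs,
          Finset.sum_range_succ, add_comm (c l), Finset.mul_sum]
      · simp [kostka_eq_zero_of_not_antitone c l ν ha]
    rw [Finset.sum_congr rfl step]
    simp only [kostka, Nat.cast_sum, Finset.sum_mul]
    rw [Finset.sum_comm']
    intro ν κ
    simp only [Finset.mem_filter]
    tauto

/-- Extension by zero of a shape to all rows. -/
def extendShape {k : ℕ} (ν : Fin k → ℕ) (i : ℕ) : ℕ := if h : i < k then ν ⟨i, h⟩ else 0

@[simp] theorem extendShape_coe {k : ℕ} (ν : Fin k → ℕ) (i : Fin k) :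
    extendShape ν i = ν i := by simp [extendShape]

theorem extendShape_of_le {k : ℕ} (ν : Fin k → ℕ) {i : ℕ} (h : k ≤ i) :
    extendShape ν i = 0 := by simp [extendShape, h]

/-- Gelfand–Tsetlin patterns of shape `ν` and weight `c` with `l` letters: `G x i` is the number of
letters at most `x` in row `i` of the corresponding tableau. -/
structure IsPattern (c : ℕ → ℕ) (l : ℕ) (ν : ℕ → ℕ) (G : ℕ → ℕ → ℕ) : Prop where
  zero : ∀ i, G 0 i = 0
  mono : ∀ x i, G x i ≤ G (x + 1) i
  strict : ∀ x i, G (x + 1) (i + 1) ≤ G x i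
  shape : ∀ x i, l ≤ x → G x i = ν i
  weight : ∀ x ≤ l, ∑ i ∈ Finset.range x, G x i = ∑ y ∈ Finset.range x, c y

theorem IsPattern.eq_zero {c : ℕ → ℕ} {l : ℕ} {ν : ℕ → ℕ} {G : ℕ → ℕ → ℕ}
    (hG : IsPattern c l ν G) : ∀ x i, x ≤ i → G x i = 0 := by
  intro x
  induction x with
  | zero => exact fun i _ => hG.zero i
  | succ x ih =>
    intro i hi
    obtain ⟨i, rfl⟩ : ∃ j, i = j + 1 := ⟨i - 1, by omega⟩
    have := hG.strict x i
    rw [ih i (by omega)] at this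
    omega

theorem IsPattern.extendShape_row {c : ℕ → ℕ} {l : ℕ} {ν : ℕ → ℕ} {G : ℕ → ℕ → ℕ}
    (hG : IsPattern c l ν G) (x : ℕ) : extendShape (fun i : Fin x => G x i) = G x := by
  funext i
  unfold extendShape
  split_ifs with h
  · rfl
  · exact (hG.eq_zero x i (not_lt.1 h)).symm

theorem IsPattern.restrict {c : ℕ → ℕ} {l : ℕ} {ν : ℕ → ℕ} {G : ℕ → ℕ → ℕ}
    (hG : IsPattern c (l + 1) ν G) : IsPattern c l (G l) (fun x => G (min x l)) where
  zero i := by simp [hG.zero]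
  mono x i := by
    rcases Nat.lt_or_ge x l with h | h
    · rw [min_eq_left h.le, min_eq_left h]
      exact hG.mono x i
    · rw [min_eq_right h, min_eq_right (by omega)]
  strict x i := by
    rcases Nat.lt_or_ge x l with h | h
    · rw [min_eq_left h.le, min_eq_left h]
      exact hG.strict x i
    · rw [min_eq_right h, min_eq_right (by omega)]
      exact (hG.mono l _).trans (hG.strict l i)
  shape x i h := by rw [min_eq_right h]
  weight x h := by
    rw [min_eq_left h]
    exact hG.weight x (by omega)

theorem IsPattern.interlaces {c : ℕ → ℕ} {l : ℕ} {κ : Fin (l + 1) → ℕ} {G : ℕ → ℕ → ℕ}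
    (hG : IsPattern c (l + 1) (extendShape κ) G) :
    Interlaces (fun i : Fin l => G l i) κ := by
  intro i
  rw [← extendShape_coe κ i.succ, ← extendShape_coe κ i.castSucc,
    ← hG.shape (l + 1) _ le_rfl, ← hG.shape (l + 1) _ le_rfl]
  exact ⟨hG.strict l i, hG.mono l i⟩

theorem IsPattern.extend {c : ℕ → ℕ} {l : ℕ} {ν : Fin l → ℕ} {κ : Fin (l + 1) → ℕ}
    {G : ℕ → ℕ → ℕ} (hG : IsPattern c l (extendShape ν) G) (hi : Interlaces ν κ)
    (hκ : ∑ i, κ i = ∑ y ∈ Finset.range (l + 1), c y) :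
    IsPattern c (l + 1) (extendShape κ) (fun x => if x ≤ l then G x else extendShape κ) where
  zero i := by simp [hG.zero]
  mono x i := by
    rcases Nat.lt_trichotomy x l with h | rfl | h
    · simpa [h.le, Nat.succ_le_of_lt h] using hG.mono x i
    · simp only [le_refl, if_true, show ¬ x + 1 ≤ x by omega, if_false, hG.shape x i le_rfl]
      rcases Nat.lt_or_ge i x with h | h
      · exact ((extendShape_coe ν ⟨i, h⟩).trans_le (hi ⟨i, h⟩).2).trans_eq
          (extendShape_coe κ (Fin.castSucc ⟨i, h⟩)).symm
      · rw [extendShape_of_le ν h]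
        exact Nat.zero_le _
    · simp [show ¬ x + 1 ≤ l by omega, h.not_ge]
  strict x i := by
    rcases Nat.lt_trichotomy x l with h | rfl | h
    · simpa [h.le, Nat.succ_le_of_lt h] using hG.strict x i
    · simp only [le_refl, if_true, show ¬ x + 1 ≤ x by omega, if_false, hG.shape x i le_rfl]
      rcases Nat.lt_or_ge i x with h | h
      · exact ((extendShape_coe κ (Fin.succ ⟨i, h⟩)).trans_le (hi ⟨i, h⟩).1).trans_eq
          (extendShape_coe ν ⟨i, h⟩).symm
      · rw [extendShape_of_le κ (by omega)]
        exact Nat.zero_le _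
    · simp only [show ¬ x + 1 ≤ l by omega, h.not_ge, if_false]
      rcases Nat.lt_or_ge i l with h' | h'
      · have := hi.antitone (Fin.castSucc_lt_succ (i := (⟨i, h'⟩ : Fin l))).le
        rw [← extendShape_coe κ, ← extendShape_coe κ] at this
        exact this
      · rw [extendShape_of_le κ (by omega)]
        exact Nat.zero_le _
  shape x i h := by simp [show ¬ x ≤ l by omega]
  weight x h := by
    rcases Nat.lt_or_ge l x with h' | h'
    · obtain rfl : x = l + 1 := by omega
      simp only [show ¬ l + 1 ≤ l by omega, if_false]
      rw [← hκ, Finset.sum_range]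
      simp
    · simpa [h'] using hG.weight x h'

/-- Removing the last letter from a pattern. -/
def patternSuccEquiv (c : ℕ → ℕ) (l : ℕ) (κ : Fin (l + 1) → ℕ)
    (hκ : ∑ i, κ i = ∑ y ∈ Finset.range (l + 1), c y) :
    {G // IsPattern c (l + 1) (extendShape κ) G} ≃
      Σ ν : {ν // ν ∈ (Finset.piAntidiag Finset.univ
          (∑ y ∈ Finset.range l, c y)).filter fun ν : Fin l → ℕ => Interlaces ν κ},
        {G // IsPattern c l (extendShape ν.1) G} where
  toFun G := ⟨⟨fun i => G.1 l i, Finset.mem_filter.2 ⟨by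
      simp only [Finset.mem_piAntidiag, Finset.mem_univ, implies_true, and_true]
      rw [← G.2.weight l (by omega), Finset.sum_range], G.2.interlaces⟩⟩,
    ⟨fun x => G.1 (min x l), by
      rw [G.2.extendShape_row l]
      exact G.2.restrict⟩⟩
  invFun p := ⟨fun x => if x ≤ l then p.2.1 x else extendShape κ,
    p.2.2.extend (Finset.mem_filter.1 p.1.2).2 hκ⟩
  left_inv G := by
    ext x i
    dsimp only
    split_ifs with h
    · rw [min_eq_left h]
    · exact (G.2.shape x i (by omega)).symm
  right_inv p := by
    obtain ⟨⟨ν, hν⟩, G, hG⟩ := p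
    refine Sigma.subtype_ext (Subtype.ext ?_) ?_
    · funext i
      simp [hG.shape l _ le_rfl]
    · funext x i
      rcases Nat.le_total x l with h | h
      · simp [h]
      · simp [h, hG.shape l _ le_rfl, hG.shape x _ h]

theorem card_isPattern (c : ℕ → ℕ) (l : ℕ) (κ : Fin l → ℕ)
    (hκ : ∑ i, κ i = ∑ y ∈ Finset.range l, c y) :
    Finite {G // IsPattern c l (extendShape κ) G} ∧
      Nat.card {G // IsPattern c l (extendShape κ) G} = kostka c l κ := by
  induction l with
  | zero =>
    have h0 : IsPattern c 0 (extendShape κ) (fun _ _ => 0) :=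
      ⟨by simp, by simp, by simp, by simp [extendShape], by simp⟩
    have : Unique {G // IsPattern c 0 (extendShape κ) G} :=
      { default := ⟨_, h0⟩
        uniq := fun G => Subtype.ext (by
          funext x i
          rw [G.2.shape x i (Nat.zero_le _), extendShape_of_le κ (Nat.zero_le _)]) }
    exact ⟨inferInstance, by simp [kostka]⟩
  | succ l ih =>
    have ih' : ∀ ν : {ν // ν ∈ (Finset.piAntidiag Finset.univ
          (∑ y ∈ Finset.range l, c y)).filter fun ν : Fin l → ℕ => Interlaces ν κ}, _ :=
      fun ν => ih ν.1 (Finset.mem_piAntidiag.1 (Finset.mem_filter.1 ν.2).1).1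
    have := fun ν => (ih' ν).1
    refine ⟨Finite.of_equiv _ (patternSuccEquiv c l κ hκ).symm, ?_⟩
    rw [Nat.card_congr (patternSuccEquiv c l κ hκ), Nat.card_sigma]
    simp only [fun ν => (ih' ν).2]
    rw [kostka]
    exact Finset.sum_coe_sort _ (fun ν => kostka c l ν)

theorem List.getElem_le_iff_lt_countP {L : List ℕ} (hL : L.Pairwise (· ≤ ·)) (x : ℕ) :
    ∀ (j : ℕ) (hj : j < L.length), L[j] ≤ x ↔ j < L.countP (· ≤ x) := by
  induction L with
  | nil => intro j hj; simp at hj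
  | cons a L ih =>
    rw [List.pairwise_cons] at hL
    intro j hj
    by_cases ha : a ≤ x
    · rw [List.countP_cons_of_pos (by simpa using ha)]
      cases j with
      | zero => simpa using ha
      | succ j => simpa using ih hL.2 j (by simpa using hj)
    · have h0 : (a :: L).countP (· ≤ x) = 0 := by
        rw [List.countP_eq_zero]
        intro b hb
        rcases List.mem_cons.1 hb with rfl | hb
        · simpa using ha
        · have := hL.1 b hb
          simp only [decide_eq_true_eq]
          omega
      rw [h0]
      have : a ≤ (a :: L)[j] := by
        cases j with
        | zero => simp
        | succ j => exact hL.1 _ (by simp)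
      omega

theorem List.eq_of_countP_le_eq {L L' : List ℕ} (hL : L.Pairwise (· ≤ ·))
    (hL' : L'.Pairwise (· ≤ ·)) (hlen : L.length = L'.length)
    (h : ∀ x : ℕ, L.countP (· ≤ x) = L'.countP (· ≤ x)) : L = L' := by
  refine List.ext_getElem hlen fun j h1 h2 => ?_
  refine eq_of_forall_ge_iff fun x => ?_
  rw [List.getElem_le_iff_lt_countP hL, List.getElem_le_iff_lt_countP hL', h]

theorem List.countP_le_eq_sum_count {L : List ℕ} (hL : ∀ y ∈ L, 0 < y) (x : ℕ) :
    L.countP (· ≤ x) = ∑ y ∈ Finset.range x, L.count (y + 1) := by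
  induction L with
  | nil => simp
  | cons a L ih =>
    have ha := hL a (by simp)
    simp only [List.count_cons, List.countP_cons, Finset.sum_add_distrib,
      ih fun y hy => hL y (by simp [hy])]
    congr 1
    have : ∀ y, (a == y + 1) = decide (y = a - 1) := by
      intro y
      rw [Bool.eq_iff_iff]
      simp
      omega
    simp only [this, decide_eq_true_eq, Finset.sum_ite_eq', Finset.mem_range]
    congr 1
    simp
    omega

theorem List.countP_lt_range (N n : ℕ) : (List.range N).countP (· < n) = min N n := by
  induction N with
  | zero => simp
  | succ N ih =>
    rw [List.range_succ, List.countP_append, ih]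
    by_cases h : N < n
    · simp [h]; omega
    · simp [h]; omega

@[to_additive]
theorem List.prod_range_getD_eq_prod_map {α M : Type*} [CommMonoid M] (L : List α) (d : α)
    (f : α → M) : ∏ i ∈ Finset.range L.length, f (L.getD i d) = (L.map f).prod := by
  induction L with
  | nil => simp
  | cons a L ih =>
    rw [List.length_cons, Finset.prod_range_succ', List.map_cons, List.prod_cons, ← ih, mul_comm]
    rfl

theorem Finset.sum_range_eq_sum_range_of_eq_zero {f : ℕ → ℕ} {a b : ℕ}
    (ha : ∀ i, a ≤ i → f i = 0) (hb : ∀ i, b ≤ i → f i = 0) :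
    ∑ i ∈ Finset.range a, f i = ∑ i ∈ Finset.range b, f i := by
  rcases Nat.le_total a b with h | h
  · exact Finset.sum_subset (Finset.range_mono h) fun i _ hi => ha i (by simpa using hi)
  · exact (Finset.sum_subset (Finset.range_mono h) fun i _ hi => hb i (by simpa using hi)).symm

namespace SkewTab

/-- Row `i` of a tableau, empty beyond the last row. -/
def row (T : SkewTab) (i : ℕ) : List ℕ := T.rows.getD i []

/-- The number of entries at most `x` in row `i`. -/
def pattern (T : SkewTab) (x i : ℕ) : ℕ := (T.row i).countP (· ≤ x)

theorem row_mem_or (T : SkewTab) (i : ℕ) : T.row i ∈ T.rows ∨ T.row i = [] := by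
  unfold row
  rcases Nat.lt_or_ge i T.rows.length with h | h
  · left
    rw [List.getD_eq_getElem _ _ h]
    exact List.getElem_mem h
  · right
    exact List.getD_eq_default _ _ h

theorem length_row (T : SkewTab) (i : ℕ) : (T.row i).length = T.shape.getD i 0 := by
  unfold row shape
  exact (List.getD_map T.rows ([] : List ℕ) List.length).symm

theorem sum_pattern (T : SkewTab) (x : ℕ) :
    ∑ i ∈ Finset.range T.rows.length, T.pattern x i = T.rows.flatten.countP (· ≤ x) := by
  unfold pattern row
  rw [List.sum_range_getD_eq_sum_map T.rows [] (fun r => r.countP (· ≤ x)), List.countP_flatten]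

theorem pattern_eq_zero_of_le (T : SkewTab) (x : ℕ) {i : ℕ} (h : T.rows.length ≤ i) :
    T.pattern x i = 0 := by
  unfold pattern row
  rw [List.getD_eq_default _ _ h]
  rfl

namespace IsCST

variable {T : SkewTab}

theorem innFn (hT : T.IsCST) (i : ℕ) : T.innFn i = 0 := by
  unfold SkewTab.innFn
  rw [hT.2]
  rcases Nat.lt_or_ge i T.rows.length with h | h
  · simp [h]
  · rw [List.getD_eq_default _ _ (by simpa using h)]

theorem pairwise_row (hT : T.IsCST) (i : ℕ) : (T.row i).Pairwise (· ≤ ·) := by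
  obtain ⟨⟨-, -, -, -, h, -, -⟩, -⟩ := hT
  rcases T.row_mem_or i with hi | hi
  · exact List.isChain_iff_pairwise.1 (h _ hi)
  · simp [hi]

theorem pos_of_mem_row (hT : T.IsCST) {i y : ℕ} (hy : y ∈ T.row i) : 0 < y := by
  obtain ⟨⟨-, -, -, -, -, h, -⟩, -⟩ := hT
  rcases T.row_mem_or i with hi | hi
  · exact h _ hi _ hy
  · simp [hi] at hy

theorem pos_of_mem_flatten (hT : T.IsCST) {y : ℕ} (hy : y ∈ T.rows.flatten) : 0 < y := by
  obtain ⟨⟨-, -, -, -, -, h, -⟩, -⟩ := hT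
  obtain ⟨r, hr, hy⟩ := List.mem_flatten.1 hy
  exact h _ hr _ hy

theorem pattern_strict (hT : T.IsCST) (x i : ℕ) :
    T.pattern (x + 1) (i + 1) ≤ T.pattern x i := by
  by_contra! hlt
  set j := T.pattern x i with hj
  have hanti : (T.row (i + 1)).length ≤ (T.row i).length := by
    have := hT.1.2.2.1 i
    simpa [outFn, hT.innFn, row] using this
  have hj1 : j < (T.row (i + 1)).length := hlt.trans_le List.countP_le_length
  have hj0 : j < (T.row i).length := hj1.trans_le hanti
  have h1 := (List.getElem_le_iff_lt_countP (hT.pairwise_row (i + 1)) (x + 1) j hj1).2 hlt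
  have h2 := hT.1.2.2.2.2.2.2 i j (by simp [hT.innFn])
    (by simpa [outFn, hT.innFn, row] using hj1) (by simp [hT.innFn])
  have h3 : T.entry i j = (T.row i)[j] := by
    simp only [entry, hT.innFn, Nat.sub_zero]
    exact List.getD_eq_getElem _ _ hj0
  have h4 : T.entry (i + 1) j = (T.row (i + 1))[j] := by
    simp only [entry, hT.innFn, Nat.sub_zero]
    exact List.getD_eq_getElem _ _ hj1
  rw [h3, h4] at h2
  have h5 := (List.getElem_le_iff_lt_countP (hT.pairwise_row i) x j hj0).1 (by omega)
  exact absurd h5 (lt_irrefl _)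

theorem isPattern (hT : T.IsCST) {c : ℕ → ℕ} {l : ℕ} (hc : ∀ i, l ≤ i → c i = 0)
    (hcont : ∀ i, T.contentCount (i + 1) = c i) :
    IsPattern c l (fun i => T.shape.getD i 0) T.pattern where
  zero i := by
    unfold pattern
    rw [List.countP_eq_zero]
    intro y hy
    have := hT.pos_of_mem_row hy
    simp only [decide_eq_true_eq]
    omega
  mono x i := List.countP_mono_left fun y _ hy => by
    simp only [decide_eq_true_eq] at hy ⊢
    omega
  strict := hT.pattern_strict
  shape x i hx := by
    rw [← T.length_row, pattern, List.countP_eq_length]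
    intro y hy
    simp only [decide_eq_true_eq]
    by_contra! hxy
    have h1 := hcont (y - 1)
    rw [hc _ (by omega), Nat.sub_add_cancel (by omega), contentCount, List.count_eq_zero] at h1
    rcases T.row_mem_or i with hi | hi
    · exact h1 (List.mem_flatten.2 ⟨_, hi, hy⟩)
    · simp [hi] at hy
  weight x _ := by
    have h0 : ∀ x i, x ≤ i → T.pattern x i = 0 := by
      intro x
      induction x with
      | zero =>
        intro i _
        unfold pattern
        rw [List.countP_eq_zero]
        intro y hy
        have := hT.pos_of_mem_row hy
        simp only [decide_eq_true_eq]
        omega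
      | succ x ih =>
        intro i hi
        obtain ⟨i, rfl⟩ : ∃ j, i = j + 1 := ⟨i - 1, by omega⟩
        have := hT.pattern_strict x i
        rw [ih i (by omega)] at this
        omega
    rw [Finset.sum_range_eq_sum_range_of_eq_zero (h0 x)
      (fun i hi => T.pattern_eq_zero_of_le x hi), T.sum_pattern,
      List.countP_le_eq_sum_count fun y hy => hT.pos_of_mem_flatten hy]
    exact Finset.sum_congr rfl fun y _ => hcont y

theorem ext_pattern {T' : SkewTab} (hT : T.IsCST) (hT' : T'.IsCST) (hs : T.shape = T'.shape)
    (h : T.pattern = T'.pattern) : T = T' := by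
  have hlen : T.rows.length = T'.rows.length := by
    simpa [shape] using congrArg List.length hs
  have hrows : T.rows = T'.rows := by
    refine List.ext_getElem hlen fun i h1 h2 => ?_
    have : T.row i = T'.row i := by
      refine List.eq_of_countP_le_eq (hT.pairwise_row i) (hT'.pairwise_row i) ?_ fun x => ?_
      · rw [length_row, length_row, hs]
      · exact congrFun (congrFun h x) i
    simpa [row, h1, h2] using this
  have hinn : T.inn = T'.inn := by rw [hT.2, hT'.2, hlen]
  cases T
  cases T'
  simp_all

end IsCST

/-- The tableau of shape `ν` with pattern `G`: the entry in row `i`, column `j` is the least `x`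
with `j < G x i`. -/
noncomputable def ofPattern (ν : List ℕ) (G : ℕ → ℕ → ℕ) : SkewTab where
  inn := List.replicate ν.length 0
  rows := (List.range ν.length).map fun i =>
    (List.range (ν.getD i 0)).map fun j => sInf {x | j < G x i}

section ofPattern

variable (ν : List ℕ) (G : ℕ → ℕ → ℕ)

theorem row_ofPattern (i : ℕ) :
    (ofPattern ν G).row i = (List.range (ν.getD i 0)).map fun j => sInf {x | j < G x i} := by
  unfold row ofPattern
  rcases Nat.lt_or_ge i ν.length with h | h
  · simp [h]
  · rw [List.getD_eq_default _ _ (by simpa using h), List.getD_eq_default _ _ h]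
    rfl

theorem shape_ofPattern : (ofPattern ν G).shape = ν := by
  refine List.ext_getElem (by simp [shape, ofPattern]) fun i h1 h2 => ?_
  simp [shape, ofPattern, h2]

theorem innFn_ofPattern (i : ℕ) : (ofPattern ν G).innFn i = 0 := by
  unfold innFn ofPattern
  rcases Nat.lt_or_ge i ν.length with h | h
  · simp [h]
  · rw [List.getD_eq_default _ _ (by simpa using h)]

theorem outFn_ofPattern (i : ℕ) : (ofPattern ν G).outFn i = ν.getD i 0 := by
  rw [outFn, innFn_ofPattern, zero_add]
  exact (length_row _ i).trans (by rw [shape_ofPattern])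

theorem entry_ofPattern {i j : ℕ} (h : j < ν.getD i 0) :
    (ofPattern ν G).entry i j = sInf {x | j < G x i} := by
  have h1 : (ofPattern ν G).entry i j = ((ofPattern ν G).row i).getD j 0 := by
    rw [entry, innFn_ofPattern]
    rfl
  rw [h1, row_ofPattern]
  rw [List.getD_eq_getElem _ _ (by simpa using h)]
  simp

variable {ν G} {c : ℕ → ℕ} {l : ℕ}

theorem sInf_le_iff (hG : IsPattern c l (fun i => ν.getD i 0) G) {i j : ℕ}
    (h : j < ν.getD i 0) (x : ℕ) : sInf {x | j < G x i} ≤ x ↔ j < G x i := by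
  refine ⟨fun hx => ?_, fun hx => Nat.sInf_le hx⟩
  have hne : {x | j < G x i}.Nonempty := ⟨l, by simpa [hG.shape l i le_rfl] using h⟩
  exact (Nat.sInf_mem hne).trans_le (monotone_nat_of_le_succ (fun x => hG.mono x i) hx)

theorem pattern_ofPattern (hG : IsPattern c l (fun i => ν.getD i 0) G) :
    (ofPattern ν G).pattern = G := by
  funext x i
  have hle : G x i ≤ ν.getD i 0 := by
    rw [← hG.shape (max x l) i (le_max_right _ _)]
    exact monotone_nat_of_le_succ (fun x => hG.mono x i) (le_max_left _ _)
  rw [pattern, row_ofPattern, List.countP_map, ← min_eq_right hle, ← List.countP_lt_range]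
  refine List.countP_congr fun j hj => ?_
  simp only [Function.comp_apply, decide_eq_true_eq]
  exact sInf_le_iff hG (List.mem_range.1 hj) x

theorem isCST_ofPattern (hν : ν.Pairwise (· ≥ ·)) (hpos : ∀ a ∈ ν, 0 < a)
    (hG : IsPattern c l (fun i => ν.getD i 0) G) : (ofPattern ν G).IsCST := by
  have hrow : ∀ r ∈ (ofPattern ν G).rows, ∃ i, r = (ofPattern ν G).row i := by
    intro r hr
    obtain ⟨i, hi, rfl⟩ := List.getElem_of_mem hr
    exact ⟨i, by simp [row, hi]⟩
  refine ⟨⟨by simp [ofPattern], ?_, ?_, ?_, ?_, ?_, ?_⟩, by simp [ofPattern]⟩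
  · intro i
    simp [innFn_ofPattern]
  · intro i
    rw [outFn_ofPattern, outFn_ofPattern]
    rcases Nat.lt_or_ge (i + 1) ν.length with h | h
    · rw [List.getD_eq_getElem _ _ h, List.getD_eq_getElem _ _ (by omega)]
      exact List.pairwise_iff_getElem.1 hν i (i + 1) (by omega) h (by omega)
    · rw [List.getD_eq_default _ _ h]
      exact Nat.zero_le _
  · intro hne
    rw [outFn_ofPattern]
    have h1 : (ofPattern ν G).rows.length = ν.length := by simp [ofPattern]
    have h2 : 0 < ν.length := h1 ▸ List.length_pos_iff.2 hne
    rw [h1, List.getD_eq_getElem _ _ (by omega)]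
    exact (hpos _ (List.getElem_mem _)).ne'
  · intro r hr
    obtain ⟨i, rfl⟩ := hrow r hr
    refine List.isChain_iff_pairwise.2 ?_
    rw [row_ofPattern, List.pairwise_map]
    refine List.pairwise_lt_range.imp_of_mem fun {j j'} hj hj' hlt => ?_
    rw [sInf_le_iff hG (List.mem_range.1 hj)]
    exact hlt.trans ((sInf_le_iff hG (List.mem_range.1 hj') _).1 le_rfl)
  · intro r hr x hx
    obtain ⟨i, rfl⟩ := hrow r hr
    rw [row_ofPattern] at hx
    obtain ⟨j, hj, rfl⟩ := List.mem_map.1 hx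
    by_contra! h
    rw [sInf_le_iff hG (List.mem_range.1 hj), hG.zero] at h
    omega
  · intro i j _ hj _
    rw [outFn_ofPattern] at hj
    have h1 : j < G (sInf {x | j < G x (i + 1)}) (i + 1) := (sInf_le_iff hG hj _).1 le_rfl
    have hj' : j < ν.getD i 0 := by
      have := hG.strict l i
      rw [hG.shape (l + 1) _ (by omega), hG.shape l _ le_rfl] at this
      exact hj.trans_le this
    rw [entry_ofPattern ν G hj, entry_ofPattern ν G hj']
    generalize sInf {x | j < G x (i + 1)} = x at h1
    cases x with
    | zero => rw [hG.zero] at h1; omega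
    | succ x =>
      rw [Nat.lt_succ_iff, sInf_le_iff hG hj']
      exact h1.trans_le (hG.strict x i)

theorem contentCount_ofPattern (hν : ν.Pairwise (· ≥ ·)) (hpos : ∀ a ∈ ν, 0 < a)
    (hc : ∀ i, l ≤ i → c i = 0) (hG : IsPattern c l (fun i => ν.getD i 0) G) (x : ℕ) :
    (ofPattern ν G).contentCount (x + 1) = c x := by
  have hT := isCST_ofPattern hν hpos hG
  have key : ∀ x, ∑ i ∈ Finset.range ν.length, G x i =
      ∑ y ∈ Finset.range x, (ofPattern ν G).contentCount (y + 1) := by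
    intro x
    have := (ofPattern ν G).sum_pattern x
    rw [List.countP_le_eq_sum_count fun y hy => hT.pos_of_mem_flatten hy,
      pattern_ofPattern hG, show (ofPattern ν G).rows.length = ν.length by simp [ofPattern]] at this
    exact this
  have h1 := key x
  have h2 := key (x + 1)
  rw [Finset.sum_range_succ _ x] at h2
  rcases Nat.lt_or_ge x l with hx | hx
  · have h0 : ∀ x i, ν.length ≤ i → G x i = 0 := by
      intro x i hi
      rw [← pattern_ofPattern hG]
      exact pattern_eq_zero_of_le _ x (by simpa [ofPattern] using hi)
    have h3 := hG.weight x hx.le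
    have h4 := hG.weight (x + 1) hx
    rw [Finset.sum_range_eq_sum_range_of_eq_zero (hG.eq_zero x) (h0 x)] at h3
    rw [Finset.sum_range_eq_sum_range_of_eq_zero (hG.eq_zero (x + 1)) (h0 (x + 1)),
      Finset.sum_range_succ _ x] at h4
    omega
  · have h5 : ∑ i ∈ Finset.range ν.length, G (x + 1) i =
        ∑ i ∈ Finset.range ν.length, G x i :=
      Finset.sum_congr rfl fun i _ => by rw [hG.shape x i hx, hG.shape (x + 1) i (by omega)]
    rw [hc x hx]
    omega

end ofPattern

theorem card_isCST_eq_card_isPattern {ν : List ℕ} (hν : ν.Pairwise (· ≥ ·))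
    (hpos : ∀ a ∈ ν, 0 < a) {c : ℕ → ℕ} {l : ℕ} (hc : ∀ i, l ≤ i → c i = 0) :
    Nat.card {T : SkewTab // T.IsCST ∧ T.shape = ν ∧ ∀ i, T.contentCount (i + 1) = c i} =
      Nat.card {G // IsPattern c l (fun i => ν.getD i 0) G} := by
  refine Nat.card_eq_of_bijective
    (fun T => ⟨T.1.pattern, by
      have := T.2.1.isPattern hc T.2.2.2
      rwa [T.2.2.1] at this⟩) ⟨fun T T' h => ?_, fun G => ?_⟩
  · exact Subtype.ext (T.2.1.ext_pattern T'.2.1 (T.2.2.1.trans T'.2.2.1.symm)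
      (congrArg Subtype.val h))
  · exact ⟨⟨ofPattern ν G.1, isCST_ofPattern hν hpos G.2, shape_ofPattern ν G.1,
      contentCount_ofPattern hν hpos hc G.2⟩, Subtype.ext (pattern_ofPattern G.2)⟩

end SkewTab

theorem pMul_eq_monomial (s : Multiset ℕ) :
    pMul s = MvPolynomial.monomial (Multiset.toFinsupp s) 1 := by
  induction s using Multiset.induction_on with
  | empty => simp [pMul]
  | cons a s ih =>
    have h : pMul (a ::ₘ s) = MvPolynomial.X a * pMul s := by simp [pMul, pGen]
    rw [h, ih, MvPolynomial.X, MvPolynomial.monomial_mul, mul_one, ← Multiset.singleton_add,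
      map_add, Multiset.toFinsupp_singleton]

theorem zed_ne_zero {n : ℕ} (nu : n.Partition) : zed nu ≠ 0 := by
  refine Finset.prod_ne_zero_iff.2 fun i _ => mul_ne_zero ?_ (by positivity)
  rcases Nat.eq_zero_or_pos i with rfl | hi
  · rw [Multiset.count_eq_zero_of_notMem fun h => (nu.parts_pos h).ne rfl, pow_zero]
    exact one_ne_zero
  · positivity

theorem coeff_phi {n : ℕ} (nu : n.Partition) (f : SymFn) :
    MvPolynomial.coeff (Multiset.toFinsupp nu.parts) (phi n f) = xiEval nu f / zed nu := by
  classical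
  simp only [phi, pPart, pMul_eq_monomial, MvPolynomial.coeff_sum, MvPolynomial.coeff_smul,
    MvPolynomial.coeff_monomial, EmbeddingLike.apply_eq_iff_eq, smul_eq_mul, mul_ite, mul_one,
    mul_zero]
  rw [Finset.sum_eq_single nu]
  · simp
  · intro b _ hb
    rw [if_neg fun h => hb (Nat.Partition.ext h)]
  · simp

/-- The map `φ_n` as a linear map. -/
noncomputable def phiLinear (n : ℕ) : SymFn →ₗ[ℚ] SymFn where
  toFun := phi n
  map_add' f g := by
    simp [phi, xiEval, add_div, add_smul, Finset.sum_add_distrib]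
  map_smul' a f := by
    simp [phi, xiEval, MvPolynomial.smul_eval, mul_div_assoc, mul_smul, Finset.smul_sum]

theorem sum_filter_dvd_sum_replicate (S : Finset ℕ) (c : ℕ → ℕ) (k : ℕ) :
    ((∑ j ∈ S, Multiset.replicate (c j) j).filter (· ∣ k)).sum =
      ∑ j ∈ S, if j ∣ k then j * c j else 0 := by
  classical
  induction S using Finset.induction_on with
  | empty => simp
  | insert a S ha ih =>
    rw [Finset.sum_insert ha, Multiset.filter_add, Multiset.sum_add, ih, Finset.sum_insert ha]
    congr 1
    split_ifs with h
    · rw [Multiset.filter_eq_self.2 fun b hb => (Multiset.eq_of_mem_replicate hb) ▸ h]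
      simp [mul_comm]
    · rw [Multiset.filter_eq_nil.2 fun b hb => (Multiset.eq_of_mem_replicate hb) ▸ h]
      simp

/-- The values of the power sums at the eigenvalues of a permutation matrix with `v j` cycles of
length `j` for `1 ≤ j ≤ N`, and one further cycle of length `v 0 > N`. -/
noncomputable def cycleSub (N : ℕ) (v : ℕ → ℚ) (k : ℕ) : ℚ :=
  (if k = 0 then v 0 else 0) + ∑ j ∈ Finset.Icc 1 N, if j ∣ k then (j : ℚ) * v j else 0

theorem exists_xiEval_eq (N : ℕ) (v : ℕ → ℕ) (hv : N < v 0) :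
    ∃ (n : ℕ) (nu : n.Partition), v 0 ≤ n ∧ ∀ f : SymFn, (∀ k ∈ f.vars, k ≤ N) →
      xiEval nu f = MvPolynomial.eval (cycleSub N fun j => (v j : ℚ)) f := by
  let s : Multiset ℕ := v 0 ::ₘ ∑ j ∈ Finset.Icc 1 N, Multiset.replicate (v j) j
  refine ⟨s.sum, ⟨s, ?_, rfl⟩, by simp [s], fun f hf => ?_⟩
  · intro i hi
    rcases Multiset.mem_cons.1 hi with rfl | hi
    · omega
    · obtain ⟨j, hj, hi⟩ := Multiset.mem_sum.1 hi
      rw [Multiset.eq_of_mem_replicate hi]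
      exact (Finset.mem_Icc.1 hj).1
  · refine MvPolynomial.eval₂Hom_congr' rfl (fun k hk _ => ?_) rfl
    have hkN := hf k hk
    have h0 : v 0 ∣ k ↔ k = 0 :=
      ⟨fun h => Nat.eq_zero_of_dvd_of_lt h (by omega), fun h => by rw [h]; exact dvd_zero _⟩
    have h1 : (s.filter (· ∣ k)).sum = (if k = 0 then v 0 else 0) +
        ∑ j ∈ Finset.Icc 1 N, if j ∣ k then j * v j else 0 := by
      rw [← sum_filter_dvd_sum_replicate]
      by_cases hk0 : k = 0
      · rw [Multiset.filter_cons_of_pos (p := (· ∣ k)) _ (h0.2 hk0), Multiset.sum_cons, if_pos hk0]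
      · rw [Multiset.filter_cons_of_neg (p := (· ∣ k)) _ (mt h0.1 hk0), if_neg hk0, zero_add]
    change (((s.filter (· ∣ k)).sum : ℕ) : ℚ) = _
    rw [h1, cycleSub]
    push_cast
    rfl

theorem exists_cycleSub_eq (N : ℕ) (y : ℕ → ℚ) : ∃ v : ℕ → ℚ, ∀ k ≤ N, cycleSub N v k = y k := by
  let w : ℕ → ℚ := fun n => ∑ x ∈ n.divisorsAntidiagonal,
    ((ArithmeticFunction.moebius x.1 : ℤ) : ℚ) * y x.2
  have hw : ∀ n > 0, ∑ i ∈ n.divisors, w i = y n :=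
    ArithmeticFunction.sum_eq_iff_sum_mul_moebius_eq.2 fun _ _ => rfl
  let v : ℕ → ℚ := fun k =>
    if k = 0 then y 0 - ∑ j ∈ Finset.Icc 1 N, w j else w k / k
  have hv : ∀ j ∈ Finset.Icc 1 N, (j : ℚ) * v j = w j := by
    intro j hj
    have : j ≠ 0 := by have := (Finset.mem_Icc.1 hj).1; omega
    have : (j : ℚ) ≠ 0 := by exact_mod_cast this
    simp only [v, if_neg ‹j ≠ 0›]
    field_simp
  refine ⟨v, fun k hk => ?_⟩
  unfold cycleSub
  rw [Finset.sum_congr rfl fun j hj => by rw [hv j hj]]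
  by_cases hk0 : k = 0
  · subst hk0
    simp [v]
  · rw [if_neg hk0, zero_add, ← Finset.sum_filter, ← hw k (Nat.pos_of_ne_zero hk0)]
    refine Finset.sum_congr ?_ fun _ _ => rfl
    ext j
    simp only [Finset.mem_filter, Finset.mem_Icc, Nat.mem_divisors]
    refine ⟨fun h => ⟨h.2, hk0⟩, fun h => ⟨⟨?_, ?_⟩, h.1⟩⟩
    · exact Nat.pos_of_dvd_of_pos h.1 (Nat.pos_of_ne_zero hk0)
    · exact (Nat.le_of_dvd (Nat.pos_of_ne_zero hk0) h.1).trans hk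

theorem eq_zero_of_phi_eq_zero (n₀ : ℕ) (f : SymFn) (hf : ∀ n, n₀ ≤ n → phi n f = 0) : f = 0 := by
  have hxi : ∀ n, n₀ ≤ n → ∀ nu : n.Partition, xiEval nu f = 0 := by
    intro n hn nu
    have h := coeff_phi nu f
    rw [hf n hn, MvPolynomial.coeff_zero] at h
    exact (div_eq_zero_iff.1 h.symm).resolve_right (zed_ne_zero nu)
  set N := f.vars.sup id
  have hN : ∀ k ∈ f.vars, k ≤ N := fun k hk => Finset.le_sup (f := id) hk
  let θ : ℕ → SymFn := fun k => (if k = 0 then MvPolynomial.X 0 else 0) +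
    ∑ j ∈ Finset.Icc 1 N, if j ∣ k then MvPolynomial.C (j : ℚ) * MvPolynomial.X j else 0
  have hθ : ∀ v, MvPolynomial.eval v (MvPolynomial.bind₁ θ f) =
      MvPolynomial.eval (cycleSub N v) f := by
    intro v
    rw [MvPolynomial.eval, MvPolynomial.eval₂Hom_bind₁]
    congr 2
    funext k
    simp only [θ, cycleSub, map_add, map_sum, apply_ite (MvPolynomial.eval₂Hom _ v)]
    simp
  have hg : MvPolynomial.bind₁ θ f = 0 := by
    refine MvPolynomial.funext_set (fun _ => Nat.cast '' Set.Ici (max (N + 1) n₀))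
      (fun _ => (Set.Ici_infinite _).image Nat.cast_injective.injOn) fun x hx => ?_
    have hx' : ∀ i, ∃ a : ℕ, max (N + 1) n₀ ≤ a ∧ (a : ℚ) = x i := fun i => hx i trivial
    choose v hv hvx using hx'
    obtain ⟨n, nu, hn, h⟩ := exists_xiEval_eq N v (by have := hv 0; omega)
    have hx : x = fun j => (v j : ℚ) := funext fun j => (hvx j).symm
    rw [hθ, hx, ← h f hN, hxi n (by have := hv 0; omega), map_zero]
  refine MvPolynomial.funext fun y => ?_
  obtain ⟨v, hv⟩ := exists_cycleSub_eq N y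
  have h1 : MvPolynomial.eval (cycleSub N v) f = MvPolynomial.eval y f :=
    MvPolynomial.eval₂Hom_congr' rfl (fun k hk _ => hv k (hN k hk)) rfl
  rw [← h1, ← hθ, hg, map_zero, map_zero]

theorem List.getD_filter_pos {L : List ℕ} (hL : L.Pairwise (· ≥ ·)) :
    ∀ i, (L.filter (0 < ·)).getD i 0 = L.getD i 0 := by
  induction L with
  | nil => simp
  | cons a L ih =>
    rw [List.pairwise_cons] at hL
    intro i
    by_cases ha : 0 < a
    · rw [List.filter_cons_of_pos (by simpa using ha)]
      cases i with
      | zero => rfl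
      | succ i => exact ih hL.2 i
    · have h0 : ∀ b ∈ a :: L, b = 0 := by
        intro b hb
        rcases List.mem_cons.1 hb with rfl | hb
        · omega
        · have := hL.1 b hb
          omega
      rw [List.filter_eq_nil_iff.2 fun b hb => by simp [h0 b hb]]
      rcases Nat.lt_or_ge i (a :: L).length with h | h
      · rw [List.getD_eq_getElem _ _ h, h0 _ (List.getElem_mem h)]
        rfl
      · rw [List.getD_eq_default _ _ h]
        rfl

theorem List.length_le_iff_getD_eq_zero {L : List ℕ} (hL : ∀ a ∈ L, 0 < a) (i : ℕ) :
    L.length ≤ i ↔ L.getD i 0 = 0 := by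
  refine ⟨fun h => List.getD_eq_default _ _ h, fun h => ?_⟩
  by_contra! hi
  rw [List.getD_eq_getElem _ _ hi] at h
  exact (hL _ (List.getElem_mem hi)).ne' h

theorem List.eq_of_getD_eq {L L' : List ℕ} (hL : ∀ a ∈ L, 0 < a) (hL' : ∀ a ∈ L', 0 < a)
    (h : ∀ i, L.getD i 0 = L'.getD i 0) : L = L' := by
  have hlen : L.length = L'.length := by
    refine eq_of_forall_ge_iff fun i => ?_
    rw [List.length_le_iff_getD_eq_zero hL, List.length_le_iff_getD_eq_zero hL', h]
  refine List.ext_getElem hlen fun i h1 h2 => ?_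
  have := h i
  rwa [List.getD_eq_getElem _ _ h1, List.getD_eq_getElem _ _ h2] at this

section partList

variable {n : ℕ} (lam : n.Partition)

theorem coe_partList : (partList lam : Multiset ℕ) = lam.parts := by
  rw [partList, Multiset.coe_reverse, Multiset.sort_eq]

theorem pairwise_partList : (partList lam).Pairwise (· ≥ ·) := by
  rw [partList, List.pairwise_reverse]
  exact Multiset.pairwise_sort _ _

theorem pos_of_mem_partList {a : ℕ} (ha : a ∈ partList lam) : 0 < a := by
  rw [← Multiset.mem_coe, coe_partList] at ha
  exact lam.parts_pos ha

theorem sum_partList : (partList lam).sum = n := by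
  rw [← Multiset.sum_coe, coe_partList, lam.parts_sum]

/-- A partition viewed as a shape with `l` rows. -/
def rowShape (l : ℕ) (i : Fin l) : ℕ := (partList lam).getD i 0

variable {lam}

theorem sum_rowShape {l : ℕ} (h : (partList lam).length ≤ l) : ∑ i, rowShape lam l i = n := by
  have h1 := List.sum_range_getD_eq_sum_map (partList lam) 0 id
  rw [List.map_id, sum_partList] at h1
  simp only [id] at h1
  unfold rowShape
  rw [← Finset.sum_range (fun i => (partList lam).getD i 0)]
  exact (Finset.sum_range_eq_sum_range_of_eq_zero
    (fun i hi => List.getD_eq_default _ _ (h.trans hi))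
    (fun i hi => List.getD_eq_default _ _ hi)).trans h1

theorem antitone_rowShape (l : ℕ) : Antitone (rowShape lam l) := by
  intro i j hij
  unfold rowShape
  rcases Nat.lt_or_ge j (partList lam).length with h | h
  · have hi : (i : ℕ) < (partList lam).length := lt_of_le_of_lt hij h
    rw [List.getD_eq_getElem _ _ h, List.getD_eq_getElem _ _ hi]
    rcases hij.eq_or_lt with rfl | hlt
    · exact le_rfl
    · exact List.pairwise_iff_getElem.1 (pairwise_partList lam) i j hi h hlt
  · rw [List.getD_eq_default _ _ h]
    exact Nat.zero_le _

theorem extendShape_rowShape {l : ℕ} (h : (partList lam).length ≤ l) :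
    extendShape (rowShape lam l) = fun i => (partList lam).getD i 0 := by
  funext i
  unfold extendShape rowShape
  split_ifs with hi
  · rfl
  · rw [List.getD_eq_default _ _ (by omega)]

end partList

theorem exists_rowShape_eq {n l : ℕ} (ν : Fin l → ℕ) (hν : Antitone ν) (hs : ∑ i, ν i = n) :
    ∃ lam : n.Partition, (partList lam).length ≤ l ∧ rowShape lam l = ν := by
  set L := (List.ofFn ν).filter (0 < ·) with hL
  have hsort : (List.ofFn ν).Pairwise (· ≥ ·) :=
    List.pairwise_ofFn.2 fun i j hij => hν hij.le
  have hsum : L.sum = n := by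
    rw [hL, ← hs, ← List.sum_ofFn]
    generalize List.ofFn ν = L'
    induction L' with
    | nil => rfl
    | cons a L' ih =>
      rcases Nat.eq_zero_or_pos a with rfl | ha
      · simpa using ih
      · simp [ha, ih]
  let lam : n.Partition := ⟨L, fun {i} hi => by simpa using (List.mem_filter.1 hi).2, by simpa⟩
  have hlam : partList lam = L := by
    have hp : (partList lam).Perm L := Multiset.coe_eq_coe.1 (coe_partList lam)
    exact hp.eq_of_pairwise' (pairwise_partList lam) (hsort.filter _)
  refine ⟨lam, ?_, ?_⟩
  · rw [hlam, hL]
    exact (List.length_filter_le _ _).trans (by simp)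
  · funext i
    rw [rowShape, hlam, hL, List.getD_filter_pos hsort]
    simp

theorem sum_piAntidiag_eq_sum_partition {M : Type*} [AddCommMonoid M] (l n : ℕ)
    (F : (Fin l → ℕ) → M) (hF : ∀ ν, ¬ Antitone ν → F ν = 0) :
    ∑ ν ∈ Finset.piAntidiag Finset.univ n, F ν =
      ∑ lam : n.Partition, if (partList lam).length ≤ l then F (rowShape lam l) else 0 := by
  classical
  rw [← Finset.sum_filter, ← Finset.sum_filter_of_ne (p := Antitone)
    fun ν _ hne => by by_contra h; exact hne (hF ν h)]
  symm
  refine Finset.sum_bij (fun lam _ => rowShape lam l) ?_ ?_ ?_ fun _ _ => rfl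
  · intro lam hlam
    simp only [Finset.mem_filter, Finset.mem_piAntidiag, Finset.mem_univ, implies_true, and_true]
    exact ⟨sum_rowShape (Finset.mem_filter.1 hlam).2, antitone_rowShape l⟩
  · intro lam hlam lam' hlam' h
    have h1 : partList lam = partList lam' := by
      refine List.eq_of_getD_eq (fun a => pos_of_mem_partList lam)
        (fun a => pos_of_mem_partList lam') fun i => ?_
      have h2 := congrArg (fun ν => extendShape ν i) h
      simpa only [extendShape_rowShape (Finset.mem_filter.1 hlam).2,
        extendShape_rowShape (Finset.mem_filter.1 hlam').2] using h2
    refine Nat.Partition.ext ?_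
    rw [← coe_partList, ← coe_partList, h1]
  · intro ν hν
    simp only [Finset.mem_filter, Finset.mem_piAntidiag, Finset.mem_univ, implies_true,
      and_true] at hν
    obtain ⟨lam, h1, h2⟩ := exists_rowShape_eq ν hν.2 hν.1
    exact ⟨lam, by simpa using h1, h2⟩

theorem sum_interlaces_eq_sum_cons {M : Type*} [AddCommMonoid M] {l m n : ℕ} (hmn : m ≤ n)
    (ν : Fin l → ℕ) (hν : ∑ i, ν i = m) (D : (Fin (l + 1) → ℕ) → M) :
    ∑ κ ∈ Finset.piAntidiag Finset.univ n with Interlaces ν κ, D κ =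
      ∑ k ∈ Finset.range (m + 1), ∑ lam ∈ Finset.piAntidiag Finset.univ k,
        if Interlaces ν (Fin.cons (n - k) lam) then D (Fin.cons (n - k) lam) else 0 := by
  simp_rw [← Finset.sum_filter]
  rw [Finset.sum_sigma']
  have hcons : ∀ κ : Fin (l + 1) → ℕ, Finset.univ.sum κ = n →
      (Fin.cons (n - ∑ i, κ (Fin.succ i)) (fun i => κ (Fin.succ i)) : Fin (l + 1) → ℕ) = κ := by
    intro κ hκ
    rw [Fin.sum_univ_succ] at hκ
    funext i
    refine Fin.cases ?_ (fun i => ?_) i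
    · rw [Fin.cons_zero]; omega
    · rw [Fin.cons_succ]
  refine Finset.sum_bij' (fun κ _ => ⟨∑ i, κ (Fin.succ i), fun i => κ (Fin.succ i)⟩)
    (fun p _ => Fin.cons (n - p.1) p.2) ?_ ?_ ?_ ?_ ?_
  · intro κ hκ
    simp only [Finset.mem_filter, Finset.mem_piAntidiag, Finset.mem_univ, implies_true, and_true,
      Finset.mem_sigma, Finset.mem_range, true_and] at hκ ⊢
    rw [hcons κ hκ.1]
    refine ⟨?_, hκ.2⟩
    rw [Nat.lt_succ_iff, ← hν]
    exact Finset.sum_le_sum fun i _ => (hκ.2 i).1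
  · rintro ⟨k, lam⟩ hp
    simp only [Finset.mem_filter, Finset.mem_piAntidiag, Finset.mem_univ, implies_true, and_true,
      Finset.mem_sigma, Finset.mem_range] at hp ⊢
    refine ⟨?_, hp.2.2⟩
    have h1 := hp.2.1
    rw [Fin.sum_univ_succ, Fin.cons_zero]
    simp only [Fin.cons_succ]
    have h2 : ∑ i, lam i = k := h1
    omega
  · intro κ hκ
    simp only [Finset.mem_filter, Finset.mem_piAntidiag, Finset.mem_univ, implies_true,
      and_true] at hκ
    exact hcons κ hκ.1
  · rintro ⟨k, lam⟩ hp
    simp only [Finset.mem_filter, Finset.mem_piAntidiag, Finset.mem_univ, implies_true, and_true,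
      Finset.mem_sigma, Finset.mem_range] at hp
    obtain ⟨-, h1, -⟩ := hp
    subst h1
    simp
  · intro κ hκ
    simp only [Finset.mem_filter, Finset.mem_piAntidiag, Finset.mem_univ, implies_true,
      and_true] at hκ
    rw [hcons κ hκ.1]

theorem hInt_of_neg (z : ℤ) (hz : z < 0) : hInt z = 0 := if_neg (by omega)

theorem hInt_natCast (n : ℕ) : hInt n = hFn n := by simp [hInt]

theorem hInt_zero : hInt 0 = 1 := by
  simp [hInt, hFn, zed, pPart, pMul]

theorem schurList_eq_schurFn (L : List ℕ) {k : ℕ} (hk : L.length ≤ k) :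
    schurList L = schurFn hInt fun i : Fin k => L.getD i 0 := by
  induction k, hk using Nat.le_induction with
  | base =>
    unfold schurList schurFn jtDet
    congr 1
    ext i j
    simp
  | succ k hk ih =>
    rw [schurFn_snoc_zero hInt hInt_zero hInt_of_neg _ (List.getD_eq_default _ _ (by simpa))]
    exact ih

theorem schurFn_cons_rowShape {n l : ℕ} (lam : n.Partition) (h : (partList lam).length ≤ l)
    (a : ℕ) : schurFn hInt (Fin.cons a (rowShape lam l) : Fin (l + 1) → ℕ) =
      schurList (a :: partList lam) := by
  rw [schurList_eq_schurFn _ (k := l + 1) (by simpa using h)]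
  congr 1
  funext i
  refine Fin.cases ?_ (fun i => ?_) i
  · rfl
  · rfl

theorem interlaces_cons_rowShape_iff {m k l : ℕ} (nu : m.Partition) (lam : k.Partition)
    (hnu : (partList nu).length ≤ l) (hlam : (partList lam).length ≤ l) {a : ℕ} (ha : m ≤ a) :
    Interlaces (rowShape nu l) (Fin.cons a (rowShape lam l)) ↔
      ∀ i, (partList lam).getD i 0 ≤ (partList nu).getD i 0 ∧
        (partList nu).getD (i + 1) 0 ≤ (partList lam).getD i 0 := by
  constructor
  · intro h i
    constructor
    · rcases Nat.lt_or_ge i l with hi | hi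
      · exact (h ⟨i, hi⟩).1
      · rw [List.getD_eq_default _ _ (hlam.trans hi)]
        exact Nat.zero_le _
    · rcases Nat.lt_or_ge (i + 1) l with hi | hi
      · exact (h ⟨i + 1, hi⟩).2
      · rw [List.getD_eq_default _ _ (hnu.trans hi)]
        exact Nat.zero_le _
  · intro h i
    refine ⟨(h i).1, ?_⟩
    obtain ⟨i, hi⟩ := i
    cases i with
    | zero =>
      refine le_trans ?_ ((sum_rowShape hnu).le.trans ha)
      exact Finset.single_le_sum (f := rowShape nu l) (fun _ _ => Nat.zero_le _)
        (Finset.mem_univ _)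
    | succ i => exact (h i).2

theorem card_isCST_eq_kostka {m : ℕ} (nu mu : m.Partition)
    (h : (partList nu).length ≤ (partList mu).length) :
    Nat.card {T : SkewTab // T.IsCST ∧ T.shape = partList nu ∧
      ∀ i, T.contentCount (i + 1) = (partList mu).getD i 0} =
    kostka (fun i => (partList mu).getD i 0) (partList mu).length
      (rowShape nu (partList mu).length) := by
  rw [SkewTab.card_isCST_eq_card_isPattern (pairwise_partList nu)
      (fun a => pos_of_mem_partList nu) (c := fun i => (partList mu).getD i 0)
      (l := (partList mu).length) (fun i hi => List.getD_eq_default _ _ hi),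
    ← extendShape_rowShape h]
  refine (card_isPattern _ _ _ ?_).2
  rw [sum_rowShape h, Finset.sum_range]
  exact (sum_rowShape (lam := mu) le_rfl).symm

theorem card_isCST_eq_zero {m : ℕ} (nu mu : m.Partition)
    (h : (partList mu).length < (partList nu).length) :
    Nat.card {T : SkewTab // T.IsCST ∧ T.shape = partList nu ∧
      ∀ i, T.contentCount (i + 1) = (partList mu).getD i 0} = 0 := by
  rw [SkewTab.card_isCST_eq_card_isPattern (pairwise_partList nu)
      (fun a => pos_of_mem_partList nu) (c := fun i => (partList mu).getD i 0)
      (l := (partList mu).length) (fun i hi => List.getD_eq_default _ _ hi)]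
  have : IsEmpty {G // IsPattern (fun i => (partList mu).getD i 0) (partList mu).length
      (fun i => (partList nu).getD i 0) G} := by
    refine ⟨fun G => ?_⟩
    have h1 := G.2.shape _ (partList mu).length le_rfl
    rw [G.2.eq_zero _ _ le_rfl, eq_comm,
      ← List.length_le_iff_getD_eq_zero fun a => pos_of_mem_partList nu] at h1
    omega
  exact Nat.card_of_isEmpty

theorem prod_map_hFn {m : ℕ} (mu : m.Partition) :
    (mu.parts.map hFn).prod =
      ∏ y ∈ Finset.range (partList mu).length, hInt ((partList mu).getD y 0 : ℕ) := by
  simp_rw [hInt_natCast]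
  rw [List.prod_range_getD_eq_prod_map, ← coe_partList mu, Multiset.map_coe, Multiset.prod_coe]

open scoped Classical in
theorem hFn_mul_prod_eq {m n : ℕ} (mu : m.Partition) (hn : 2 * m ≤ n) :
    hFn (n - m) * (mu.parts.map hFn).prod =
      ∑ nu : Nat.Partition m, ∑ k ∈ Finset.range (m + 1),
        ∑ lam : Nat.Partition k,
          if (∀ i, (partList lam).getD i 0 ≤ (partList nu).getD i 0 ∧
                (partList nu).getD (i + 1) 0 ≤ (partList lam).getD i 0)
          then ((Nat.card {T : SkewTab // T.IsCST ∧ T.shape = partList nu ∧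
                  ∀ i, T.contentCount (i + 1) = (partList mu).getD i 0} : ℚ))
                • schurList ((n - k) :: partList lam)
          else 0 := by
  set l := (partList mu).length
  set c : ℕ → ℕ := fun i => (partList mu).getD i 0 with hc
  have hcm : ∑ y ∈ Finset.range l, c y = m := by
    rw [Finset.sum_range]
    exact sum_rowShape (lam := mu) le_rfl
  have hF : ∀ ν : Fin l → ℕ, ¬ Antitone ν →
      hInt (n - m : ℕ) * ((kostka c l ν : SymFn) * schurFn hInt ν) = 0 := fun ν hν => by
    simp [kostka_eq_zero_of_not_antitone c l ν hν]
  rw [prod_map_hFn, prod_eq_sum_kostka_mul_schurFn hInt hInt_of_neg c, hcm, ← hInt_natCast,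
    Finset.mul_sum, sum_piAntidiag_eq_sum_partition l m _ hF]
  refine Finset.sum_congr rfl fun nu _ => ?_
  split_ifs with hnu
  · rw [mul_left_comm, mul_schurFn hInt hInt_of_neg _ (antitone_rowShape l), sum_rowShape hnu,
      Nat.sub_add_cancel (by omega), sum_interlaces_eq_sum_cons (by omega) _ (sum_rowShape hnu),
      Finset.mul_sum]
    refine Finset.sum_congr rfl fun k hk => ?_
    have hk' : k ≤ m := Nat.lt_succ_iff.1 (Finset.mem_range.1 hk)
    rw [sum_piAntidiag_eq_sum_partition l k, Finset.mul_sum]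
    · refine Finset.sum_congr rfl fun lam _ => ?_
      by_cases hlam : (partList lam).length ≤ l
      · rw [if_pos hlam, schurFn_cons_rowShape lam hlam, mul_ite, mul_zero]
        refine if_congr (interlaces_cons_rowShape_iff nu lam hnu hlam (by omega)) ?_ rfl
        rw [card_isCST_eq_kostka nu mu hnu, Nat.cast_smul_eq_nsmul, nsmul_eq_mul]
      · rw [if_neg hlam, mul_zero, if_neg]
        intro h
        have h1 := (h l).1
        rw [List.getD_eq_default _ _ hnu, Nat.le_zero,
          ← List.length_le_iff_getD_eq_zero fun a => pos_of_mem_partList lam] at h1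
        exact hlam h1
    · intro lam hlam
      refine if_neg fun h => hlam fun i j hij => ?_
      simpa using h.antitone (Fin.succ_le_succ_iff.2 hij)
  · rw [card_isCST_eq_zero nu mu (not_le.1 hnu)]
    simp

open scoped Classical in
/-- for a partition `μ` of `m`, the element `ĥ_μ` (characterized by
`φ_n(ĥ_μ) = h_{(n−|μ|,μ)}` for `n ≥ 2m`) expands in the irreducible character basis
`s̃_λ` (characterized by `φ_n(s̃_λ) = s_{(n−|λ|,λ)}`) as
`ĥ_μ = ∑_{ν ⊢ m} ∑_{λ : ν/λ horizontal strip} K_{νμ} s̃_λ`, where `K_{νμ}` is the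
Kostka number. -/
theorem ht_expansion_in_st (m : ℕ) (mu : Nat.Partition m)
    (ht : SymFn) (st : ∀ k : ℕ, Nat.Partition k → SymFn)
    (hht : ∀ n, 2 * m ≤ n → phi n ht = hFn (n - m) * (mu.parts.map hFn).prod)
    (hst : ∀ (k : ℕ) (lam : Nat.Partition k) (n : ℕ), 2 * k ≤ n →
        phi n (st k lam) = schurList ((n - k) :: partList lam)) :
    ht = ∑ nu : Nat.Partition m, ∑ k ∈ Finset.range (m + 1),
        ∑ lam : Nat.Partition k,
          if (∀ i, (partList lam).getD i 0 ≤ (partList nu).getD i 0 ∧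
                (partList nu).getD (i + 1) 0 ≤ (partList lam).getD i 0)
          then ((Nat.card {T : SkewTab // T.IsCST ∧ T.shape = partList nu ∧
                  ∀ i, T.contentCount (i + 1) = (partList mu).getD i 0} : ℚ))
                • st k lam
          else 0 := by
  rw [← sub_eq_zero]
  refine eq_zero_of_phi_eq_zero (2 * m) _ fun n hn => ?_
  change phiLinear n _ = 0
  rw [map_sub, sub_eq_zero]
  refine ((hht n hn).trans (hFn_mul_prod_eq mu hn)).trans ?_
  simp only [map_sum]
  refine Finset.sum_congr rfl fun nu _ => Finset.sum_congr rfl fun k hk =>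
    Finset.sum_congr rfl fun lam _ => ?_
  have hk' : k ≤ m := Nat.lt_succ_iff.1 (Finset.mem_range.1 hk)
  split_ifs
  · rw [map_smul]
    congr 1
    exact (hst k lam n (by omega)).symm
  · exact (map_zero _).symm
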